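/- Let R be a commutative noetherian ring, let J be a Gorenstein injective R-module, and let p be a prime ideal of R that is maximal in the small support of J; that is, width_{R_p}(J_p) < ∞ and width_{R_q}(J_q) = ∞ for every prime ideal q strictly containing p. Then width_{R_p}(J_p) = depth(R_p); equivalently, Tor_i^{R_p}(κ(p), J_p) = 0 for i < depth(R_p) and Tor_d^{R_p}(κ(p), J_p) ≠ 0 for d = depth(R_p). -/

import Mathlib

/-!
Let `R` be a commutative noetherian ring, `J` a Gorenstein injective `R`-module, and `p`
a prime ideal that is maximal in the small support of `J`: `width_{R_p} J_p < ∞` and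
`width_{R_q} J_q = ∞` for every prime `q` strictly containing `p`. Then
`width_{R_p} J_p = depth R_p`.
-/

universe u

open CategoryTheory

/-- A witness that `J` is a Gorenstein injective `R`-module: an exact complex `I` of
injective `R`-modules (with differentials `d i : I (i+1) →ₗ[R] I i`) such that
`Hom_R(E, I)` is exact for every injective `R`-module `E`, together with an
isomorphism `J ≅ ker (I 0 → I (-1))`. -/
structure GorensteinInjectiveWitness (R : Type u) [CommRing R]
    (J : Type u) [AddCommGroup J] [Module R J] : Type (u + 1) where
  I : ℤ → Type u
  [acg : ∀ i, AddCommGroup (I i)]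
  [mod : ∀ i, Module R (I i)]
  inj : ∀ i, Module.Injective R (I i)
  d : ∀ i : ℤ, I (i + 1) →ₗ[R] I i
  d_comp_d : ∀ i : ℤ, (d i).comp (d (i + 1)) = 0
  exact : ∀ i : ℤ, LinearMap.ker (d i) = LinearMap.range (d (i + 1))
  hom_exact : ∀ (E : Type u) [AddCommGroup E] [Module R E], Module.Injective R E →
    ∀ (i : ℤ) (f : E →ₗ[R] I (i + 1)), (d i).comp f = 0 →
      ∃ g : E →ₗ[R] I (i + 1 + 1), (d (i + 1)).comp g = f
  ker_iso : Nonempty (J ≃ₗ[R] LinearMap.ker (d (-1)))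

/-- `J` is a Gorenstein injective `R`-module. -/
def IsGorensteinInjective (R : Type u) [CommRing R]
    (J : Type u) [AddCommGroup J] [Module R J] : Prop :=
  Nonempty (GorensteinInjectiveWitness R J)

/-- The depth of a noetherian local ring `A`: the supremum (in `ℕ∞`) of lengths of
`A`-regular sequences contained in the maximal ideal. -/
noncomputable def ringDepth (A : Type u) [CommRing A] [IsLocalRing A] : ℕ∞ :=
  sSup {c : ℕ∞ | ∃ rs : List A, c = rs.length ∧
    (∀ r ∈ rs, r ∈ IsLocalRing.maximalIdeal A) ∧ RingTheory.Sequence.IsRegular A rs}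

/-- The width of a module `N` over a local ring `A`:
`inf { i | Tor_i^A(k, N) ≠ 0 } ∈ ℕ∞`, where `k` is the residue field of `A`. -/
noncomputable def modWidth (A : Type u) [CommRing A] [IsLocalRing A]
    (N : Type u) [AddCommGroup N] [Module A N] : ℕ∞ :=
  sInf {c : ℕ∞ | ∃ i : ℕ, c = i ∧
    ¬ Subsingleton (((Tor (ModuleCat.{u} A) i).obj
      (ModuleCat.of A (IsLocalRing.ResidueField A))).obj (ModuleCat.of A N))}

/-
`J` is the zeroth syzygy `Z 0` of an exact complex `⋯ → I 1 → I 0 → Z 0 → 0` of injective modules.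
Injective modules have strong divisibility properties, and shifting indefinitely to the left along
the resolution passes them on to the syzygies: `I n → Z n` is onto on `b`-torsion, for every ideal
`b`, and on the elements killed by a regular sequence `rs`. Two facts follow over a local ring
`(A, m, k)`. First, `Z n` and its `m`-torsion `Γ Z n` differ by modules on which some `x ∈ m` is
bijective, so the width of `Z n` can be finite only if `Γ Z n ≠ 0`. Second, the width of `Z n` is
the length of `rs` plus the width of `(0 :_{Z n} rs)`.

Let `rs` have length `depth A`, so that `m s ⊆ (rs)` for some `s ∉ (rs)`. If `(0 :_{Z n} rs)` had
positive width, then the socle of `I (n + 1)` would map onto that of `I n`. Every map `f` from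
`E := Γ I n` to `Z n` factors through `I n`, because `E` is injective; changing the factorization
by a map through `I (n + 1)`, one can make it vanish on the socle of `E`, so `f ∈ m Hom(E, Z n)`.
Thus `Hom(E, Z n) = m Hom(E, Z n)`, which forces `Hom(E, Z n) = 0` as `E` is `m`-torsion, and then
`Γ Z n = 0` because `E → Γ Z n` is onto. Hence the width is `depth A` as soon as `Γ Z n ≠ 0`.

Over `R`, the small support of `Z n` therefore consists of associated primes. If `q` is a maximal
associated prime, then localization identifies the `q`-torsion of `Z n` with that of `(Z n)_q`, so
the factorization property used above passes to `R_q` and the width at `q` is `depth R_q < ∞`. A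
prime that is maximal in the small support is thus a maximal associated prime.
-/

section Torsion

open Submodule Ideal

variable {R M N : Type*} [CommRing R] [AddCommGroup M] [Module R M] [AddCommGroup N] [Module R N]

lemma map_mem_torsionBySet (f : M →ₗ[R] N) {s : Set R} {y : M} (hy : y ∈ torsionBySet R M s) :
    f y ∈ torsionBySet R N s := by
  rw [mem_torsionBySet_iff] at hy ⊢
  intro r
  rw [← map_smul, hy r, map_zero]

lemma map_mem_torsionBySet_iff {f : M →ₗ[R] N} (hf : Function.Injective f) {s : Set R} {y : M} :
    f y ∈ torsionBySet R N s ↔ y ∈ torsionBySet R M s := by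
  simp only [mem_torsionBySet_iff, ← map_smul, map_eq_zero_iff f hf]

lemma map_mem_primaryComponent_iff {f : M →ₗ[R] N} (hf : Function.Injective f) {b : Ideal R}
    {y : M} : f y ∈ b.primaryComponent N ↔ y ∈ b.primaryComponent M := by
  simp only [primaryComponent_mem, map_mem_torsionBySet_iff hf]

lemma primaryComponent_primaryComponent (b : Ideal R) :
    b.primaryComponent (b.primaryComponent M) = ⊤ :=
  eq_top_iff.mpr fun y _ =>
    (map_mem_primaryComponent_iff (b.primaryComponent M).injective_subtype).mp y.2

lemma torsionBySet_sup_span_singleton (a : Ideal R) (x : R) :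
    torsionBySet R M ↑(a ⊔ span {x}) = torsionBySet R M a ⊓ torsionBy R M x := by
  rw [← torsionBySet_ideal_span_singleton_eq]
  exact (torsion_gc R M).u_inf

lemma mem_primaryComponent_sup_span_singleton {b : Ideal R} {x : R} {y : M} :
    y ∈ (b ⊔ span {x}).primaryComponent M ↔
      y ∈ b.primaryComponent M ∧ ∃ k : ℕ, x ^ k • y = 0 := by
  simp only [primaryComponent_mem, mem_torsionBySet_iff, Subtype.forall, SetLike.mem_coe]
  constructor
  · rintro ⟨n, hn⟩
    exact ⟨⟨n, fun r hr => hn r (pow_right_mono le_sup_left n hr)⟩,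
      n, hn _ (Ideal.pow_mem_pow (Ideal.mem_sup_right (Ideal.mem_span_singleton_self x)) n)⟩
  · rintro ⟨⟨n, hn⟩, k, hk⟩
    refine ⟨n + k, fun r hr => ?_⟩
    obtain ⟨s, hs, t, ht, rfl⟩ := Submodule.mem_sup.mp (sup_pow_add_le_pow_sup_pow hr)
    rw [span_singleton_pow] at ht
    obtain ⟨c, rfl⟩ := mem_span_singleton'.mp ht
    rw [add_smul, hn s hs, mul_smul, hk, smul_zero, add_zero]

lemma exists_le_torsionBySet_pow_of_fg {a : Ideal R} {P : Submodule R M} (hP : P.FG)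
    (h : P ≤ a.primaryComponent M) : ∃ n : ℕ, P ≤ torsionBySet R M ↑(a ^ n) := by
  induction P, hP using Submodule.fg_induction with
  | singleton y =>
    simpa only [Submodule.span_singleton_le_iff_mem, primaryComponent_mem] using h
  | sup P₁ P₂ _ _ h₁ h₂ =>
    obtain ⟨n₁, hn₁⟩ := h₁ (le_sup_left.trans h)
    obtain ⟨n₂, hn₂⟩ := h₂ (le_sup_right.trans h)
    have hmono {m n : ℕ} (hmn : m ≤ n) :
        torsionBySet R M ↑(a ^ m) ≤ torsionBySet R M ↑(a ^ n) :=
      torsionBySet_le_torsionBySet_of_subset (Ideal.pow_le_pow_right hmn)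
    exact ⟨max n₁ n₂, sup_le (hn₁.trans (hmono (le_max_left _ _)))
      (hn₂.trans (hmono (le_max_right _ _)))⟩

lemma eq_zero_of_smul_top_eq_top_of_primaryComponent_eq_top {a : Ideal R}
    (h : a • (⊤ : Submodule R (M →ₗ[R] N)) = ⊤) (hE : a.primaryComponent M = ⊤)
    (f : M →ₗ[R] N) : f = 0 := by
  have hpow (n : ℕ) : a ^ n • (⊤ : Submodule R (M →ₗ[R] N)) = ⊤ := by
    induction n with
    | zero => simp
    | succ n ih => rw [pow_succ, ← smul_eq_mul, smul_assoc, h, ih]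
  ext e
  obtain ⟨n, hn⟩ := (primaryComponent_mem M a e).mp (hE ▸ mem_top)
  have hf : f ∈ a ^ n • (⊤ : Submodule R (M →ₗ[R] N)) := (hpow n).ge mem_top
  refine Submodule.smul_induction_on hf (fun r hr g _ => ?_) fun f g hf hg => ?_
  · rw [LinearMap.smul_apply, ← map_smul, (mem_torsionBySet_iff _ _).mp hn ⟨r, hr⟩, map_zero,
      LinearMap.zero_apply]
  · rw [LinearMap.add_apply, hf, hg, LinearMap.zero_apply, add_zero]

end Torsion

section InjectiveModule

open Submodule Ideal

variable {R : Type u} [CommRing R] {E M N Q : Type u} [AddCommGroup E] [Module R E]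
  [AddCommGroup M] [Module R M] [AddCommGroup N] [Module R N] [AddCommGroup Q] [Module R Q]

lemma exists_comp_eq_of_ker_le (hQ : Module.Injective R Q) (φ : M →ₗ[R] N) (ψ : M →ₗ[R] Q)
    (h : LinearMap.ker φ ≤ LinearMap.ker ψ) : ∃ χ : N →ₗ[R] Q, χ ∘ₗ φ = ψ := by
  obtain ⟨χ, hχ⟩ := Module.Injective.extension_property R Q _ _
    ((LinearMap.ker φ).liftQ φ le_rfl)
    (LinearMap.ker_eq_bot.mp (ker_liftQ_eq_bot _ _ _ le_rfl)) ((LinearMap.ker φ).liftQ ψ h)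
  exact ⟨χ, LinearMap.ext fun x => LinearMap.congr_fun hχ (Submodule.Quotient.mk x)⟩

lemma exists_mem_torsionBySet_smul_eq (hQ : Module.Injective R Q) {a : Ideal R} {s : R} {y : Q}
    (h : ∀ r, r * s ∈ a → r • y = 0) : ∃ q ∈ torsionBySet R Q a, s • q = y := by
  obtain ⟨χ, hχ⟩ := exists_comp_eq_of_ker_le hQ (a.mkQ ∘ₗ LinearMap.toSpanSingleton R R s)
    (LinearMap.toSpanSingleton R Q y) fun r hr => h r ((Submodule.Quotient.mk_eq_zero a).mp hr)
  refine ⟨χ (a.mkQ 1), (mem_torsionBySet_iff _ _).mpr fun t => ?_, ?_⟩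
  · have ht : a.mkQ (t.1 • 1) = 0 := (Submodule.Quotient.mk_eq_zero a).mpr (by simp)
    rw [← map_smul, ← map_smul, ht, map_zero]
  · simpa [← map_smul, -mkQ_apply] using LinearMap.congr_fun hχ 1

lemma exists_mem_torsionBySet_pow_smul_eq [IsNoetherianRing R] (hQ : Module.Injective R Q)
    {a : Ideal R} {q : Q} (hq : q ∈ torsionBySet R Q a) (x : R) (k : ℕ) :
    ∃ q' ∈ torsionBySet R Q a, ∃ j, x ^ j • (x ^ k • q' - q) = 0 := by
  let colon : ℕ →o Ideal R :=
    ⟨fun j => Submodule.comap (LinearMap.mulRight R (x ^ j)) a, fun i j hij r hr => by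
      obtain ⟨l, rfl⟩ := Nat.exists_eq_add_of_le hij
      simpa [pow_add, ← mul_assoc] using a.mul_mem_right _ hr⟩
  obtain ⟨j, hj⟩ := monotone_stabilizes_iff_noetherian.mpr ‹IsNoetherianRing R› colon
  obtain ⟨q', hq', hxq'⟩ := exists_mem_torsionBySet_smul_eq hQ (a := a) (s := x ^ (j + k))
    (y := x ^ j • q) fun r hr => by
      have hr' : r ∈ colon j := (hj (j + k) (Nat.le_add_right _ _)).ge hr
      rw [← mul_smul]
      exact (mem_torsionBySet_iff _ _).mp hq ⟨r * x ^ j, hr'⟩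
  exact ⟨q', hq', j, by rw [smul_sub, ← mul_smul, ← pow_add, hxq', sub_self]⟩

lemma exists_mem_torsionBySet_smul_eq_of_isSMulRegular (hQ : Module.Injective R Q) {a : Ideal R}
    {x : R} (hx : IsSMulRegular (R ⧸ a) x) {y : Q} (hy : y ∈ torsionBySet R Q a) :
    ∃ q ∈ torsionBySet R Q a, x • q = y :=
  exists_mem_torsionBySet_smul_eq hQ fun r hr => (mem_torsionBySet_iff _ _).mp hy
    ⟨r, mem_of_isSMulRegular_quotient_of_smul_mem hx (by rwa [smul_eq_mul, mul_comm])⟩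

lemma injective_primaryComponent [IsNoetherianRing R] (hQ : Module.Injective R Q) (a : Ideal R) :
    Module.Injective R (a.primaryComponent Q) := by
  refine Module.Baer.injective fun b f => ?_
  let f' : b →ₗ[R] Q := (a.primaryComponent Q).subtype ∘ₗ f
  obtain ⟨n, hn⟩ : ∃ n : ℕ, LinearMap.range f' ≤ torsionBySet R Q ↑(a ^ n) :=
    exists_le_torsionBySet_pow_of_fg
      (LinearMap.range_eq_map f' ▸ (IsNoetherian.noetherian ⊤).map f')
      (LinearMap.range_le_iff_comap.mpr (eq_top_iff.mpr fun y _ => (f y).2))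
  have hker : a ^ n • (⊤ : Submodule R b) ≤ LinearMap.ker f' := Submodule.smul_le.mpr
    fun r hr y _ => (map_smul f' r y).trans
      ((mem_torsionBySet_iff _ _).mp (hn (LinearMap.mem_range_self f' y)) ⟨r, hr⟩)
  -- Artin–Rees: `f'` kills `aᵐ⁺ⁿ ∩ b`, hence extends to a map on `R / aᵐ⁺ⁿ`.
  obtain ⟨m, hm⟩ := exists_pow_inf_eq_pow_smul a b
  have hab : a ^ (m + n) ⊓ b ≤ a ^ n • b := by
    have := (hm (m + n) (Nat.le_add_right m n)).le.trans (smul_mono_right _ inf_le_right)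
    simpa [Nat.add_sub_cancel_left] using this
  obtain ⟨χ, hχ⟩ := exists_comp_eq_of_ker_le hQ ((a ^ (m + n)).mkQ ∘ₗ b.subtype) f' fun y hy =>
    hker ((mem_smul_top_iff _ _ _).mpr (hab ⟨(Submodule.Quotient.mk_eq_zero _).mp hy, y.2⟩))
  have hχa (r : R) : χ ((a ^ (m + n)).mkQ r) ∈ a.primaryComponent Q := by
    refine (primaryComponent_mem _ _ _).mpr ⟨m + n, (mem_torsionBySet_iff _ _).mpr fun t => ?_⟩
    have ht : (a ^ (m + n)).mkQ (t.1 • r) = 0 :=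
      (Submodule.Quotient.mk_eq_zero _).mpr ((a ^ (m + n)).mul_mem_right r t.2)
    rw [← map_smul, ← map_smul, ht, map_zero]
  exact ⟨(χ ∘ₗ (a ^ (m + n)).mkQ).codRestrict _ hχa,
    fun y hy => Subtype.ext (LinearMap.congr_fun hχ ⟨y, hy⟩)⟩

lemma mem_smul_top_of_forall_mem_torsionBySet (hQ : Module.Injective R Q) {a : Ideal R}
    (ha : a.FG) {g : E →ₗ[R] Q} (hg : ∀ e ∈ torsionBySet R E a, g e = 0) :
    g ∈ a • (⊤ : Submodule R (E →ₗ[R] Q)) := by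
  induction a, ha using Submodule.fg_induction generalizing g with
  | singleton x =>
    obtain ⟨χ, rfl⟩ := exists_comp_eq_of_ker_le hQ (LinearMap.lsmul R E x) g fun e he =>
      hg e ((torsionBySet_ideal_span_singleton_eq x).ge he)
    have hχ : χ ∘ₗ LinearMap.lsmul R E x = x • χ := by ext; simp
    exact hχ ▸ Submodule.smul_mem_smul (Submodule.mem_span_singleton_self x) mem_top
  | sup a b _ _ iha ihb =>
    let φ := (torsionBySet R E (a : Set R)).mkQ
    let ψ := (torsionBySet R E (b : Set R)).mkQ
    obtain ⟨χ, hχ⟩ := exists_comp_eq_of_ker_le hQ (φ.prod ψ) g fun e he => by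
      rw [LinearMap.ker_prod, ker_mkQ, ker_mkQ] at he
      exact hg e ((torsion_gc R E).u_inf.ge he)
    have hsum : g = χ ∘ₗ LinearMap.inl R _ _ ∘ₗ φ + χ ∘ₗ LinearMap.inr R _ _ ∘ₗ ψ := by
      rw [← hχ]
      ext e
      simp [← map_add]
    rw [hsum, Submodule.sup_smul]
    refine add_mem_sup (iha fun e he => ?_) (ihb fun e he => ?_)
    · simp [φ, (Submodule.Quotient.mk_eq_zero _).mpr he, Prod.mk_zero_zero]
    · simp [ψ, (Submodule.Quotient.mk_eq_zero _).mpr he, Prod.mk_zero_zero]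

end InjectiveModule

section Resolution

open Submodule Ideal

variable {R : Type u} [CommRing R] {Z I : ℕ → Type u} [∀ n, AddCommGroup (Z n)]
  [∀ n, Module R (Z n)] [∀ n, AddCommGroup (I n)] [∀ n, Module R (I n)]

/-- The maps `ι n` and `π n` splice to an exact sequence `⋯ → I 1 → I 0 → Z 0 → 0` of injective
modules `I n`. The syzygies `Z n` are part of the data, so that every step of the resolution is a
short exact sequence `0 → Z (n + 1) → I n → Z n → 0`. -/
structure IsLeftInjectiveResolution (ι : ∀ n, Z (n + 1) →ₗ[R] I n) (π : ∀ n, I n →ₗ[R] Z n) :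
    Prop where
  injective : ∀ n, Module.Injective R (I n)
  ι_injective : ∀ n, Function.Injective (ι n)
  exact : ∀ n, Function.Exact (ι n) (π n)
  π_surjective : ∀ n, Function.Surjective (π n)

namespace IsLeftInjectiveResolution

variable {ι : ∀ n, Z (n + 1) →ₗ[R] I n} {π : ∀ n, I n →ₗ[R] Z n}

lemma π_sub_ι (h : IsLeftInjectiveResolution ι π) {n : ℕ} (y : I n) (z : Z (n + 1)) :
    π n (y - ι n z) = π n y := by
  rw [map_sub, (h.exact n).apply_apply_eq_zero, sub_zero]

lemma surjOn_primaryComponent_sup_span_singleton [IsNoetherianRing R]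
    (h : IsLeftInjectiveResolution ι π) {b : Ideal R}
    (hb : ∀ n, Set.SurjOn (π n) (b.primaryComponent (I n)) (b.primaryComponent (Z n)))
    (x : R) (n : ℕ) :
    Set.SurjOn (π n) ((b ⊔ span {x}).primaryComponent (I n))
      ((b ⊔ span {x}).primaryComponent (Z n)) := by
  intro z hz
  obtain ⟨hzb, k, hk⟩ := mem_primaryComponent_sup_span_singleton.mp hz
  obtain ⟨y, hy, rfl⟩ := hb n hzb
  rw [← map_smul] at hk
  obtain ⟨w, hw⟩ := (h.exact n _).mp hk
  have hwb : w ∈ b.primaryComponent (Z (n + 1)) :=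
    (map_mem_primaryComponent_iff (h.ι_injective n)).mp (hw ▸ smul_mem _ _ hy)
  obtain ⟨v, hv, rfl⟩ := hb (n + 1) hwb
  obtain ⟨t, hvt⟩ := (primaryComponent_mem (I (n + 1)) b v).mp hv
  obtain ⟨v', hv', j, hj⟩ := exists_mem_torsionBySet_pow_smul_eq (h.injective (n + 1)) hvt x k
  refine ⟨y - ι n (π (n + 1) v'), mem_primaryComponent_sup_span_singleton.mpr
    ⟨sub_mem hy ?_, j + k, ?_⟩, h.π_sub_ι y _⟩
  · exact (primaryComponent_mem _ _ _).mpr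
      ⟨t, map_mem_torsionBySet (ι n ∘ₗ π (n + 1)) hv'⟩
  · calc x ^ (j + k) • (y - ι n (π (n + 1) v'))
        = -ι n (π (n + 1) (x ^ j • (x ^ k • v' - v))) := by
          simp only [map_smul, map_sub, hw, pow_add, mul_smul, smul_sub, neg_sub]
      _ = 0 := by rw [hj, map_zero, map_zero, neg_zero]

lemma surjOn_primaryComponent [IsNoetherianRing R] (h : IsLeftInjectiveResolution ι π)
    (b : Ideal R) (n : ℕ) :
    Set.SurjOn (π n) (b.primaryComponent (I n)) (b.primaryComponent (Z n)) := by
  suffices key : ∀ b : Ideal R, b.FG → ∀ c : Ideal R,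
      (∀ n, Set.SurjOn (π n) (c.primaryComponent (I n)) (c.primaryComponent (Z n))) →
      ∀ n, Set.SurjOn (π n) ((c ⊔ b).primaryComponent (I n)) ((c ⊔ b).primaryComponent (Z n)) by
    have hbot (n : ℕ) : Set.SurjOn (π n) ((⊥ : Ideal R).primaryComponent (I n))
        ((⊥ : Ideal R).primaryComponent (Z n)) := fun z _ => by
      obtain ⟨y, rfl⟩ := h.π_surjective n z
      exact ⟨y, (primaryComponent_mem _ _ _).mpr ⟨1, by simp⟩, rfl⟩
    simpa only [bot_sup_eq] using key b (IsNoetherian.noetherian b) ⊥ hbot n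
  intro b hb
  induction b, hb using Submodule.fg_induction with
  | singleton x => exact fun c hc => h.surjOn_primaryComponent_sup_span_singleton hc x
  | sup b₁ b₂ _ _ h₁ h₂ => exact fun c hc => sup_assoc c b₁ b₂ ▸ h₂ _ (h₁ c hc)

lemma exists_mem_primaryComponent_pow_smul_sub_eq_zero [IsNoetherianRing R]
    (h : IsLeftInjectiveResolution ι π) {b : Ideal R} {n : ℕ} {z : Z n}
    (hz : z ∈ b.primaryComponent (Z n)) (x : R) (k : ℕ) :
    ∃ z' ∈ b.primaryComponent (Z n), ∃ j, x ^ j • (x ^ k • z' - z) = 0 := by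
  obtain ⟨y, hy, rfl⟩ := h.surjOn_primaryComponent b n hz
  obtain ⟨t, hyt⟩ := (primaryComponent_mem (I n) b y).mp hy
  obtain ⟨y', hy', j, hj⟩ := exists_mem_torsionBySet_pow_smul_eq (h.injective n) hyt x k
  exact ⟨π n y', (primaryComponent_mem _ _ _).mpr ⟨t, map_mem_torsionBySet _ hy'⟩, j, by
    rw [← map_smul, ← map_sub, ← map_smul, hj, map_zero]⟩

lemma surjOn_torsionBySet_sup_span_singleton (h : IsLeftInjectiveResolution ι π) {a : Ideal R}
    (ha : ∀ n, Set.SurjOn (π n) (torsionBySet R (I n) a) (torsionBySet R (Z n) a)) {x : R}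
    (hx : IsSMulRegular (R ⧸ a) x) (n : ℕ) :
    Set.SurjOn (π n) (torsionBySet R (I n) ↑(a ⊔ span {x}))
      (torsionBySet R (Z n) ↑(a ⊔ span {x})) := by
  rw [torsionBySet_sup_span_singleton, torsionBySet_sup_span_singleton]
  rintro z ⟨hza, hzx⟩
  obtain ⟨y, hy, rfl⟩ := ha n hza
  have hxy : π n (x • y) = 0 := by rwa [map_smul]
  obtain ⟨w, hw⟩ := (h.exact n _).mp hxy
  have hwa : w ∈ torsionBySet R (Z (n + 1)) a :=
    (map_mem_torsionBySet_iff (h.ι_injective n)).mp (hw ▸ smul_mem _ _ hy)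
  obtain ⟨v, hv, rfl⟩ := ha (n + 1) hwa
  obtain ⟨v', hv', rfl⟩ :=
    exists_mem_torsionBySet_smul_eq_of_isSMulRegular (h.injective (n + 1)) hx hv
  refine ⟨y - ι n (π (n + 1) v'), ⟨sub_mem hy (map_mem_torsionBySet (ι n ∘ₗ π (n + 1)) hv'), ?_⟩,
    h.π_sub_ι y _⟩
  rw [SetLike.mem_coe, mem_torsionBy_iff, smul_sub, ← hw, map_smul, map_smul, sub_self]

end IsLeftInjectiveResolution

end Resolution

section Duality

open Abelian TensorProduct

lemma exact_iff_exact_dualMap {K V₁ V₂ V₃ : Type*} [Field K] [AddCommGroup V₁] [Module K V₁]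
    [AddCommGroup V₂] [Module K V₂] [AddCommGroup V₃] [Module K V₃] (f : V₁ →ₗ[K] V₂)
    (g : V₂ →ₗ[K] V₃) : Function.Exact f g ↔ Function.Exact g.dualMap f.dualMap := by
  rw [LinearMap.exact_iff, LinearMap.exact_iff, LinearMap.ker_dualMap_eq_dualAnnihilator_range,
    LinearMap.range_dualMap_eq_dualAnnihilator_ker, Subspace.dualAnnihilator_inj, eq_comm]

variable {A : Type u} [CommRing A] (K : Type u) [Field K] [Algebra A K]

lemma exact_lTensor_iff_exact_lcomp {M₁ M₂ M₃ : Type*} [AddCommGroup M₁] [Module A M₁]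
    [AddCommGroup M₂] [Module A M₂] [AddCommGroup M₃] [Module A M₃] (f : M₁ →ₗ[A] M₂)
    (g : M₂ →ₗ[A] M₃) :
    Function.Exact (f.lTensor K) (g.lTensor K) ↔
      Function.Exact (g.lcomp K K) (f.lcomp K K) := by
  refine (exact_iff_exact_dualMap (f.baseChange K) (g.baseChange K)).trans
    (Function.Exact.iff_of_ladder_linearEquiv (e₁ := LinearMap.liftBaseChangeEquiv K)
      (e₂ := LinearMap.liftBaseChangeEquiv K) (e₃ := LinearMap.liftBaseChangeEquiv K) ?_ ?_)
  all_goals ext; simp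

lemma subsingleton_tensorProduct_iff (N : Type*) [AddCommGroup N] [Module A N] :
    Subsingleton (K ⊗[A] N) ↔ Subsingleton (N →ₗ[A] K) :=
  (Module.subsingleton_dual_iff K).symm.trans
    (LinearMap.liftBaseChangeEquiv K).toEquiv.subsingleton_congr.symm

lemma subsingleton_ext_zero_iff (N N' : Type u) [AddCommGroup N] [Module A N]
    [AddCommGroup N'] [Module A N'] :
    Subsingleton (Ext (ModuleCat.of A N) (ModuleCat.of A N') 0) ↔ Subsingleton (N →ₗ[A] N') :=
  (Ext.homEquiv₀.trans ModuleCat.homEquiv).subsingleton_congr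

lemma subsingleton_tor_succ_iff {N : ModuleCat.{u} A} (P : ProjectiveResolution N) (n : ℕ) :
    Subsingleton (((Tor (ModuleCat.{u} A) (n + 1)).obj (ModuleCat.of A K)).obj N) ↔
      Function.Exact ((P.complex.d (n + 2) (n + 1)).hom.lTensor K)
        ((P.complex.d (n + 1) n).hom.lTensor K) := by
  refine (P.isoLeftDerivedObj ((MonoidalCategory.tensoringLeft _).obj (ModuleCat.of A K))
    (n + 1)).toLinearEquiv.toEquiv.subsingleton_congr.trans ?_
  rw [← ModuleCat.isZero_iff_subsingleton]
  refine (HomologicalComplex.exactAt_iff_isZero_homology _ _).symm.trans ?_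
  rw [HomologicalComplex.exactAt_iff' _ (n + 2) (n + 1) n (by simp) (by simp)]
  exact ShortComplex.ShortExact.moduleCat_exact_iff_function_exact _

lemma subsingleton_ext_succ_iff {N : ModuleCat.{u} A} (P : ProjectiveResolution N) (n : ℕ) :
    Subsingleton (Ext N (ModuleCat.of A K) (n + 1)) ↔
      Function.Exact ((P.complex.d (n + 1) n).hom.lcomp K K)
        ((P.complex.d (n + 2) (n + 1)).hom.lcomp K K) := by
  have hP : (P.complex.d (n + 1) n).hom ∘ₗ (P.complex.d (n + 2) (n + 1)).hom = 0 :=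
    congrArg ModuleCat.Hom.hom (P.complex.d_comp_d (n + 2) (n + 1) n)
  constructor
  · refine fun _ φ => ⟨fun hφ => ?_, ?_⟩
    · obtain ⟨ψ, hψ⟩ := (P.extMk_eq_zero_iff (ModuleCat.ofHom φ) (n + 2) rfl
        (ModuleCat.hom_ext hφ) n rfl).mp (Subsingleton.elim _ _)
      exact ⟨ψ.hom, congrArg ModuleCat.Hom.hom hψ⟩
    · rintro ⟨ψ, rfl⟩
      exact (congrArg ψ.comp hP).trans ψ.comp_zero
  · refine fun h => subsingleton_of_forall_eq 0 fun x => ?_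
    obtain ⟨φ, hφ, rfl⟩ := P.extMk_surjective x (n + 2) rfl
    obtain ⟨ψ, hψ⟩ := (h φ.hom).mp (congrArg ModuleCat.Hom.hom hφ)
    exact (P.extMk_eq_zero_iff _ _ _ _ n rfl).mpr ⟨ModuleCat.ofHom ψ, ModuleCat.hom_ext hψ⟩

lemma subsingleton_tor_iff_subsingleton_ext (N : Type u) [AddCommGroup N] [Module A N] (i : ℕ) :
    Subsingleton (((Tor (ModuleCat.{u} A) i).obj (ModuleCat.of A K)).obj (ModuleCat.of A N)) ↔
      Subsingleton (Ext (ModuleCat.of A N) (ModuleCat.of A K) i) := by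
  cases i with
  | zero =>
    rw [subsingleton_ext_zero_iff, ← subsingleton_tensorProduct_iff]
    exact (((MonoidalCategory.tensoringLeft _).obj
      (ModuleCat.of A K)).leftDerivedZeroIsoSelf.app _).toLinearEquiv.toEquiv.subsingleton_congr
  | succ n =>
    let P := projectiveResolution (ModuleCat.of A N)
    rw [subsingleton_tor_succ_iff K P, subsingleton_ext_succ_iff K P]
    exact exact_lTensor_iff_exact_lcomp K _ _

lemma exists_shortExact_ofHom {N₁ N₂ N₃ : Type u} [AddCommGroup N₁] [Module A N₁]
    [AddCommGroup N₂] [Module A N₂] [AddCommGroup N₃] [Module A N₃]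
    {f : N₁ →ₗ[A] N₂} {g : N₂ →ₗ[A] N₃} (hf : Function.Injective f) (hfg : Function.Exact f g)
    (hg : Function.Surjective g) :
    ∃ w, (ShortComplex.mk (ModuleCat.ofHom f) (ModuleCat.ofHom g) w).ShortExact :=
  ⟨by ext x; exact hfg.apply_apply_eq_zero x,
    { exact := (ShortComplex.ShortExact.moduleCat_exact_iff_function_exact _).mpr hfg
      mono_f := (ModuleCat.mono_iff_injective _).mpr hf
      epi_g := (ModuleCat.epi_iff_surjective _).mpr hg }⟩

end Duality

section Width

open Abelian IsLocalRing Submodule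

variable {A : Type u} [CommRing A] [IsLocalRing A]

/-- The group `Extⁱ(N, k)`, where `k` is the residue field of `A`. By duality over `k` it vanishes
if and only if `Torᵢ(k, N)` does, so it may replace the latter in computing the width. -/
abbrev ExtResidueField (N : Type u) [AddCommGroup N] [Module A N] (i : ℕ) : Type u :=
  Ext (ModuleCat.of A N) (ModuleCat.of A (ResidueField A)) i

variable {N N' N₁ N₂ N₃ : Type u} [AddCommGroup N] [Module A N] [AddCommGroup N'] [Module A N']
  [AddCommGroup N₁] [Module A N₁] [AddCommGroup N₂] [Module A N₂] [AddCommGroup N₃] [Module A N₃]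

lemma natCast_le_modWidth_iff {n : ℕ} :
    (n : ℕ∞) ≤ modWidth A N ↔ ∀ i < n, Subsingleton (ExtResidueField (A := A) N i) := by
  simp only [modWidth, le_sInf_iff, Set.mem_ofPred_eq, subsingleton_tor_iff_subsingleton_ext]
  constructor
  · intro h i hi
    by_contra hN
    exact hi.not_ge (Nat.cast_le.mp (h i ⟨i, rfl, hN⟩))
  · rintro h _ ⟨i, rfl, hi⟩
    exact Nat.cast_le.mpr (not_lt.mp fun hin => hi (h i hin))

lemma modWidth_eq_top_iff :
    modWidth A N = ⊤ ↔ ∀ i, Subsingleton (ExtResidueField (A := A) N i) := by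
  simp only [ENat.eq_top_iff_forall_ge, natCast_le_modWidth_iff]
  exact ⟨fun h i => h (i + 1) i i.lt_succ_self, fun h _ i _ => h i⟩

lemma modWidth_congr (e : N ≃ₗ[A] N') : modWidth A N = modWidth A N' := by
  have h (i : ℕ) := (((Tor (ModuleCat.{u} A) i).obj (ModuleCat.of A (ResidueField A))).mapIso
    e.toModuleIso).toLinearEquiv.toEquiv.subsingleton_congr
  simp only [modWidth, h]

lemma modWidth_eq_zero_iff :
    modWidth A N = 0 ↔ maximalIdeal A • (⊤ : Submodule A N) ≠ ⊤ := by
  have h : ((1 : ℕ) : ℕ∞) ≤ modWidth A N ↔ maximalIdeal A • (⊤ : Submodule A N) = ⊤ := by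
    simp only [natCast_le_modWidth_iff, Nat.lt_one_iff, forall_eq]
    rw [subsingleton_ext_zero_iff, ← subsingleton_tensorProduct_iff,
      ← Submodule.Quotient.subsingleton_iff]
    exact (TensorProduct.quotTensorEquivQuotSMul N (maximalIdeal A)).toEquiv.subsingleton_congr
  rw [ne_eq, ← h, Nat.cast_one, Order.one_le_iff_ne_zero, not_not]

lemma smul_residueField_eq_zero {x : A} (hx : x ∈ maximalIdeal A) (y : ResidueField A) :
    x • y = 0 := by
  rw [Algebra.smul_def, ResidueField.algebraMap_eq, (residue_eq_zero_iff x).mpr hx, zero_mul]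

lemma smul_id_comp_extResidueField_eq_zero {x : A} (hx : x ∈ maximalIdeal A) {i : ℕ}
    (e : ExtResidueField (A := A) N i) :
    (Ext.mk₀ (x • 𝟙 (ModuleCat.of A N))).comp e (zero_add i) = 0 := by
  have hk : x • 𝟙 (ModuleCat.of A (ResidueField A)) = 0 := by
    ext
    exact smul_residueField_eq_zero hx _
  rw [Ext.mk₀_smul, Ext.smul_comp, Ext.mk₀_id_comp, Ext.smul_eq_comp_mk₀, hk, Ext.mk₀_zero,
    Ext.comp_zero]

lemma min_modWidth_le_of_exact {f : N₁ →ₗ[A] N₂} {g : N₂ →ₗ[A] N₃} (hf : Function.Injective f)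
    (hfg : Function.Exact f g) (hg : Function.Surjective g) :
    min (modWidth A N₁) (modWidth A N₃) ≤ modWidth A N₂ := by
  obtain ⟨w, hS⟩ := exists_shortExact_ofHom hf hfg hg
  refine ENat.forall_natCast_le_iff_le.mp fun n hn => ?_
  obtain ⟨h₁, h₃⟩ := le_min_iff.mp hn
  rw [natCast_le_modWidth_iff] at h₁ h₃ ⊢
  refine fun i hi => subsingleton_of_forall_eq 0 fun e => ?_
  obtain ⟨x, rfl⟩ := Ext.contravariant_sequence_exact₂ hS _ e ((h₁ i hi).elim _ _)
  rw [(h₃ i hi).elim x 0, Ext.comp_zero]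

lemma subsingleton_extResidueField_zero {x : A} (hx : x ∈ maximalIdeal A)
    (hs : Function.Surjective (x • · : N → N)) :
    Subsingleton (ExtResidueField (A := A) N 0) := by
  refine (subsingleton_ext_zero_iff N (ResidueField A)).mpr ⟨fun φ ψ => LinearMap.ext fun y => ?_⟩
  obtain ⟨y, rfl⟩ := hs y
  simp only [map_smul, smul_residueField_eq_zero hx]

lemma subsingleton_extResidueField_torsionBy_iff {x : A} (hx : x ∈ maximalIdeal A)
    (hs : Function.Surjective (x • · : N → N)) (i : ℕ) :
    Subsingleton (ExtResidueField (A := A) (torsionBy A N x) i) ↔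
      Subsingleton (ExtResidueField (A := A) N i) ∧
        Subsingleton (ExtResidueField (A := A) N (i + 1)) := by
  obtain ⟨w, hS⟩ := exists_shortExact_ofHom (torsionBy A N x).injective_subtype
    (LinearMap.exact_subtype_ker_map (LinearMap.lsmul A N x)) hs
  constructor
  · refine fun h => ⟨subsingleton_of_forall_eq 0 fun e => ?_,
      subsingleton_of_forall_eq 0 fun e => ?_⟩
    · obtain ⟨y, rfl⟩ := Ext.contravariant_sequence_exact₂ hS _ e (h.elim _ _)
      exact smul_id_comp_extResidueField_eq_zero hx y
    · obtain ⟨y, rfl⟩ := Ext.contravariant_sequence_exact₃ hS _ e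
        (smul_id_comp_extResidueField_eq_zero hx e) (add_comm 1 i)
      rw [h.elim y 0, Ext.comp_zero]
  · refine fun ⟨h₀, h₁⟩ => subsingleton_of_forall_eq 0 fun e => ?_
    obtain ⟨y, rfl⟩ := Ext.contravariant_sequence_exact₁ hS _ e (add_comm 1 i) (h₁.elim _ _)
    rw [h₀.elim y 0, Ext.comp_zero]

lemma modWidth_eq_modWidth_torsionBy_add_one {x : A} (hx : x ∈ maximalIdeal A)
    (hs : Function.Surjective (x • · : N → N)) :
    modWidth A N = modWidth A (torsionBy A N x) + 1 := by
  refine ENat.eq_of_forall_natCast_le_iff fun n => ?_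
  cases n with
  | zero => simp
  | succ n =>
    rw [Nat.cast_add, Nat.cast_one, ENat.add_le_add_iff_right ENat.one_ne_top,
      ← Nat.cast_one, ← Nat.cast_add, natCast_le_modWidth_iff, natCast_le_modWidth_iff]
    simp only [subsingleton_extResidueField_torsionBy_iff hx hs]
    refine ⟨fun h i hi => ⟨h i (by lia), h (i + 1) (by lia)⟩, fun h i hi => ?_⟩
    cases i with
    | zero => exact subsingleton_extResidueField_zero hx hs
    | succ i => exact (h i (by lia)).2

lemma modWidth_eq_top_of_subsingleton [Subsingleton N] : modWidth A N = ⊤ := by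
  refine modWidth_eq_top_iff.mpr fun i => subsingleton_of_forall_eq 0 fun e => ?_
  rw [← Ext.mk₀_id_comp e, (ModuleCat.isZero_of_subsingleton (ModuleCat.of A N)).eq_zero_of_src
    (𝟙 _), Ext.mk₀_zero, Ext.zero_comp]

lemma modWidth_eq_top_of_bijective_smul {x : A} (hx : x ∈ maximalIdeal A)
    (hb : Function.Bijective (x • · : N → N)) : modWidth A N = ⊤ := by
  have : Subsingleton (torsionBy A N x) := (Submodule.subsingleton_iff_eq_bot).mpr <|
    LinearMap.ker_eq_bot.mpr hb.injective
  rw [modWidth_eq_modWidth_torsionBy_add_one hx hb.surjective, modWidth_eq_top_of_subsingleton,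
    top_add]

end Width

section RegularSequence

open IsLocalRing RingTheory.Sequence

variable {A : Type u} [CommRing A]

lemma isWeaklyRegular_concat_iff {rs : List A} {x : A} :
    IsWeaklyRegular A (rs ++ [x]) ↔
      IsWeaklyRegular A rs ∧ IsSMulRegular (A ⧸ Ideal.ofList rs) x := by
  rw [isWeaklyRegular_append_iff, isWeaklyRegular_singleton_iff, smul_eq_mul, Ideal.mul_top]

lemma exists_notMem_forall_mul_mem [IsNoetherianRing A] {m a : Ideal A}
    (h : ∀ x ∈ m, ¬ IsSMulRegular (A ⧸ a) x) :
    ∃ s, s ∉ a ∧ ∀ t ∈ m, t * s ∈ a := by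
  have hN : ¬ Subsingleton ((A ⧸ m) →ₗ[A] (A ⧸ a)) := by
    rw [IsSMulRegular.subsingleton_linearMap_iff, Ideal.annihilator_quotient]
    exact fun ⟨x, hx, hreg⟩ => h x hx hreg
  rw [not_subsingleton_iff_nontrivial] at hN
  obtain ⟨φ, hφ⟩ := exists_ne (0 : (A ⧸ m) →ₗ[A] (A ⧸ a))
  obtain ⟨s, hs⟩ := Ideal.Quotient.mk_surjective (φ 1)
  refine ⟨s, fun hsa => hφ ?_, fun t ht => ?_⟩
  · refine Submodule.linearMap_qext _ (LinearMap.ext_ring ?_)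
    exact hs.symm.trans (Ideal.Quotient.eq_zero_iff_mem.mpr hsa)
  · have ht0 : t • (1 : A ⧸ m) = 0 := by
      rw [Algebra.smul_def, mul_one]
      exact Ideal.Quotient.eq_zero_iff_mem.mpr ht
    rw [← Ideal.Quotient.eq_zero_iff_mem, map_mul, hs, ← Ideal.Quotient.algebraMap_eq,
      ← Algebra.smul_def, ← map_smul, ht0, map_zero]

variable [IsLocalRing A]

lemma not_isSMulRegular_of_length_eq_ringDepth {rs : List A}
    (hm : ∀ r ∈ rs, r ∈ maximalIdeal A) (hrs : IsWeaklyRegular A rs)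
    (hlen : rs.length = ringDepth A) {x : A} (hx : x ∈ maximalIdeal A) :
    ¬ IsSMulRegular (A ⧸ Ideal.ofList rs) x := by
  intro hreg
  have hmem : ∀ r ∈ rs ++ [x], r ∈ maximalIdeal A :=
    List.forall_mem_append.mpr ⟨hm, List.forall_mem_singleton.mpr hx⟩
  have hle : ((rs ++ [x]).length : ℕ∞) ≤ rs.length := hlen ▸ le_sSup ⟨_, rfl, hmem,
    .of_isWeaklyRegular_of_mem_maximalIdeal A hmem (isWeaklyRegular_concat_iff.mpr ⟨hrs, hreg⟩)⟩
  rw [Nat.cast_le, List.length_append, List.length_singleton] at hle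
  lia

variable [IsNoetherianRing A]

lemma ringDepth_lt_top : ringDepth A < ⊤ := by
  have hdim : ringKrullDim A = (Order.krullDim (PrimeSpectrum A)) := rfl
  rw [Order.krullDim_eq_length_of_finiteDimensionalOrder] at hdim
  refine (sSup_le ?_).trans_lt (ENat.natCast_lt_top (LTSeries.longestOf (PrimeSpectrum A)).length)
  rintro _ ⟨rs, rfl, hm, hreg⟩
  have hlt : Ideal.ofList rs ≠ ⊤ :=
    ne_top_of_le_ne_top (maximalIdeal.isMaximal A).ne_top (Ideal.span_le.mpr hm)
  have := Ideal.Quotient.nontrivial_iff.mpr hlt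
  have hle : (rs.length : WithBot ℕ∞) ≤ ringKrullDim A :=
    (le_add_of_nonneg_left ringKrullDim_nonneg_of_nontrivial).trans_eq
      (ringKrullDim_add_length_eq_ringKrullDim_of_isRegular rs hreg)
  rw [hdim] at hle
  exact_mod_cast hle

variable (A) in
lemma exists_isRegular_length_eq_ringDepth :
    ∃ rs : List A, (∀ r ∈ rs, r ∈ maximalIdeal A) ∧ IsRegular A rs ∧ rs.length = ringDepth A := by
  have : Nonempty {c : ℕ∞ | ∃ rs : List A, c = rs.length ∧
      (∀ r ∈ rs, r ∈ maximalIdeal A) ∧ IsRegular A rs} := ⟨_, [], rfl, by simp, IsRegular.nil A A⟩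
  obtain ⟨rs, hlen, hm, hreg⟩ := ENat.sSup_mem_of_nonempty_of_lt_top (ringDepth_lt_top (A := A))
  exact ⟨rs, hm, hreg, hlen.symm⟩

end RegularSequence

section RegularSequenceResolution

open RingTheory.Sequence Submodule

variable {R : Type u} [CommRing R] {Z I : ℕ → Type u} [∀ n, AddCommGroup (Z n)]
  [∀ n, Module R (Z n)] [∀ n, AddCommGroup (I n)] [∀ n, Module R (I n)]
  {ι : ∀ n, Z (n + 1) →ₗ[R] I n} {π : ∀ n, I n →ₗ[R] Z n}

namespace IsLeftInjectiveResolution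

lemma surjOn_torsionBySet_ofList (h : IsLeftInjectiveResolution ι π) {rs : List R}
    (hrs : IsWeaklyRegular R rs) (n : ℕ) :
    Set.SurjOn (π n) (torsionBySet R (I n) (Ideal.ofList rs))
      (torsionBySet R (Z n) (Ideal.ofList rs)) := by
  induction rs using List.reverseRecOn generalizing n with
  | nil =>
    intro z _
    obtain ⟨y, rfl⟩ := h.π_surjective n z
    exact ⟨y, by simp, rfl⟩
  | append_singleton rs x ih =>
    obtain ⟨hrs, hx⟩ := isWeaklyRegular_concat_iff.mp hrs
    rw [Ideal.ofList_append, Ideal.ofList_singleton]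
    exact h.surjOn_torsionBySet_sup_span_singleton (ih hrs) hx n

lemma surjective_smul_torsionBySet_ofList (h : IsLeftInjectiveResolution ι π) {rs : List R}
    {x : R} (hrs : IsWeaklyRegular R (rs ++ [x])) (n : ℕ) :
    Function.Surjective (x • · : torsionBySet R (Z n) (Ideal.ofList rs) → _) := by
  obtain ⟨hrs, hx⟩ := isWeaklyRegular_concat_iff.mp hrs
  rintro ⟨z, hz⟩
  obtain ⟨y, hy, rfl⟩ := h.surjOn_torsionBySet_ofList hrs n hz
  obtain ⟨y', hy', rfl⟩ := exists_mem_torsionBySet_smul_eq_of_isSMulRegular (h.injective n) hx hy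
  exact ⟨⟨π n y', map_mem_torsionBySet _ hy'⟩, Subtype.ext (map_smul _ _ _).symm⟩

end IsLeftInjectiveResolution

end RegularSequenceResolution

section MaximalIdeal

open Submodule

variable {R : Type u} [CommRing R] {m : Ideal R} [hm : m.IsMaximal]

lemma isSemisimpleModule_torsionBySet_of_isMaximal (M : Type*) [AddCommGroup M] [Module R M] :
    IsSemisimpleModule R (torsionBySet R M m) := by
  have ht := torsionBySet_isTorsionBySet (R := R) (M := M) m
  let := ht.module
  let : Field (R ⧸ m) := Ideal.Quotient.field _
  exact ht.isSemisimpleModule_iff.mp inferInstance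

lemma exists_comp_eqOn_torsionBySet_of_surjOn {E M Q : Type u} [AddCommGroup E] [Module R E]
    [AddCommGroup M] [Module R M] [AddCommGroup Q] [Module R Q] (hQ : Module.Injective R Q)
    {ψ : Q →ₗ[R] M} (hψ : Set.SurjOn ψ (torsionBySet R Q m) (torsionBySet R M m)) (g : E →ₗ[R] M) :
    ∃ k : E →ₗ[R] Q, Set.EqOn (ψ ∘ₗ k) g (torsionBySet R E m) := by
  let soc (N : Type u) [AddCommGroup N] [Module R N] := torsionBySet R N m
  have := isSemisimpleModule_torsionBySet_of_isMaximal (m := m) E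
  have := isSemisimpleModule_torsionBySet_of_isMaximal (m := m) Q
  obtain ⟨σ, hσ⟩ := IsSemisimpleModule.lifting_property
    (ψ.restrict fun _ hy => map_mem_torsionBySet ψ hy : soc Q →ₗ[R] soc M)
    (fun y => let ⟨z, hz, hzy⟩ := hψ y.2; ⟨⟨z, hz⟩, Subtype.ext hzy⟩)
    (g.restrict fun _ hy => map_mem_torsionBySet g hy : soc E →ₗ[R] soc M)
  obtain ⟨k, hk⟩ := Module.Injective.extension_property R Q _ _ (soc E).subtype
    (soc E).injective_subtype ((soc Q).subtype ∘ₗ σ)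
  refine ⟨k, fun e he => ?_⟩
  calc ψ (k e) = ψ (σ ⟨e, he⟩) := congrArg ψ (LinearMap.congr_fun hk ⟨e, he⟩)
    _ = g e := congrArg Subtype.val (LinearMap.congr_fun hσ ⟨e, he⟩)

namespace IsLeftInjectiveResolution

variable {Z I : ℕ → Type u} [∀ n, AddCommGroup (Z n)] [∀ n, Module R (Z n)]
  [∀ n, AddCommGroup (I n)] [∀ n, Module R (I n)]
  {ι : ∀ n, Z (n + 1) →ₗ[R] I n} {π : ∀ n, I n →ₗ[R] Z n}

-- Write a socle element as `s • q` with `q` killed by `a`. As `(0 :_Z a) = m (0 :_Z a)` and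
-- `m * s ⊆ a`, `π q` lifts to some `q'` killed by `s`; then `s • q = s • (q - q')` comes from `Z`.
lemma surjOn_torsionBySet_of_smul_top_eq_top (h : IsLeftInjectiveResolution ι π) {a : Ideal R}
    (ha : ∀ n, Set.SurjOn (π n) (torsionBySet R (I n) a) (torsionBySet R (Z n) a)) {s : R}
    (hs : s ∉ a) (hsm : ∀ t ∈ m, t * s ∈ a) {n : ℕ}
    (hZ : m • (⊤ : Submodule R (torsionBySet R (Z n) a)) = ⊤) :
    Set.SurjOn (ι n ∘ₗ π (n + 1)) (torsionBySet R (I (n + 1)) m)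
      (torsionBySet R (I n) m) := by
  have hcolon (r : R) (hr : r * s ∈ a) : r ∈ m := by
    by_contra hrm
    obtain ⟨c, t, ht, hct⟩ := hm.exists_inv hrm
    have hs' : s = c * (r * s) + t * s := by rw [← mul_assoc, ← add_mul, hct, one_mul]
    exact hs (hs' ▸ a.add_mem (a.mul_mem_left c hr) (hsm t ht))
  intro y hy
  obtain ⟨q, hq, rfl⟩ := exists_mem_torsionBySet_smul_eq (h.injective n) (a := a) (s := s)
    fun r hr => (mem_torsionBySet_iff _ _).mp hy ⟨r, hcolon r hr⟩
  have hlift (z : torsionBySet R (Z n) a) :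
      ∃ q' ∈ torsionBySet R (I n) a, π n q' = z ∧ s • q' = 0 := by
    refine Submodule.smul_induction_on (hZ.ge mem_top : z ∈ _) (fun r hr z _ => ?_) ?_
    · obtain ⟨q', hq', hz⟩ := ha n z.2
      refine ⟨r • q', smul_mem _ _ hq', by rw [map_smul, hz, coe_smul], ?_⟩
      rw [← mul_smul, mul_comm]
      exact (mem_torsionBySet_iff _ _).mp hq' ⟨_, hsm r hr⟩
    · rintro z₁ z₂ ⟨q₁, hq₁, h₁, h₁'⟩ ⟨q₂, hq₂, h₂, h₂'⟩
      exact ⟨q₁ + q₂, add_mem hq₁ hq₂, by rw [map_add, h₁, h₂, coe_add],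
        by rw [smul_add, h₁', h₂', add_zero]⟩
  obtain ⟨q', hq', hπ, hsq'⟩ := hlift ⟨π n q, map_mem_torsionBySet _ hq⟩
  obtain ⟨w, hw⟩ := (h.exact n (q - q')).mp (by rw [map_sub, hπ, sub_self])
  have hwa : w ∈ torsionBySet R (Z (n + 1)) a :=
    (map_mem_torsionBySet_iff (h.ι_injective n)).mp (hw ▸ sub_mem hq hq')
  obtain ⟨v, hv, rfl⟩ := ha (n + 1) hwa
  refine ⟨s • v, (mem_torsionBySet_iff _ _).mpr fun t => ?_, ?_⟩
  · rw [← mul_smul]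
    exact (mem_torsionBySet_iff _ _).mp hv ⟨_, hsm t t.2⟩
  · rw [map_smul, LinearMap.comp_apply, hw, smul_sub, hsq', sub_zero]

variable [IsNoetherianRing R]

lemma smul_top_eq_top_of_forall_exists_lift (h : IsLeftInjectiveResolution ι π) {n : ℕ}
    (hsoc : Set.SurjOn (ι n ∘ₗ π (n + 1)) (torsionBySet R (I (n + 1)) m)
      (torsionBySet R (I n) m))
    {E : Type u} [AddCommGroup E] [Module R E]
    (hlift : ∀ f : E →ₗ[R] Z n, ∃ g, π n ∘ₗ g = f) :
    m • (⊤ : Submodule R (E →ₗ[R] Z n)) = ⊤ := by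
  refine eq_top_iff.mpr fun f _ => ?_
  obtain ⟨g, rfl⟩ := hlift f
  obtain ⟨k, hk⟩ := exists_comp_eqOn_torsionBySet_of_surjOn (h.injective (n + 1)) hsoc g
  have hg : g - (ι n ∘ₗ π (n + 1)) ∘ₗ k ∈ m • (⊤ : Submodule R (E →ₗ[R] I n)) :=
    mem_smul_top_of_forall_mem_torsionBySet (h.injective n) (IsNoetherian.noetherian _)
      fun e he => sub_eq_zero.mpr (hk he).symm
  have hπ : π n ∘ₗ (g - (ι n ∘ₗ π (n + 1)) ∘ₗ k) = π n ∘ₗ g :=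
    LinearMap.ext fun e => h.π_sub_ι _ _
  exact hπ ▸ smul_top_le_comap_smul_top _ (LinearMap.compRight R (π n)) hg

lemma primaryComponent_eq_bot_of_forall_exists_lift (h : IsLeftInjectiveResolution ι π) {n : ℕ}
    (hsoc : Set.SurjOn (ι n ∘ₗ π (n + 1)) (torsionBySet R (I (n + 1)) m)
      (torsionBySet R (I n) m))
    (hlift : ∀ f : m.primaryComponent (I n) →ₗ[R] Z n, ∃ g, π n ∘ₗ g = f) :
    m.primaryComponent (Z n) = ⊥ := by
  let Γ := m.primaryComponent (I n)
  have hπ : π n ∘ₗ Γ.subtype = 0 := eq_zero_of_smul_top_eq_top_of_primaryComponent_eq_top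
    (h.smul_top_eq_top_of_forall_exists_lift hsoc hlift)
    (primaryComponent_primaryComponent _) _
  refine (Submodule.eq_bot_iff _).mpr fun z hz => ?_
  obtain ⟨y, hy, rfl⟩ := h.surjOn_primaryComponent _ n hz
  exact LinearMap.congr_fun hπ ⟨y, hy⟩

end IsLeftInjectiveResolution

end MaximalIdeal

section LocalRing

open IsLocalRing RingTheory.Sequence Submodule

variable {A : Type u} [CommRing A] [IsLocalRing A]

lemma modWidth_le_of_mem_range_iff {N N' : Type u} [AddCommGroup N] [Module A N]
    [AddCommGroup N'] [Module A N'] {x : A} (hx : x ∈ maximalIdeal A) {f : N' →ₗ[A] N}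
    (hf : Function.Injective f) (hmem : ∀ y, y ∈ LinearMap.range f ↔ ∃ k : ℕ, x ^ k • y = 0)
    (hdiv : ∀ y : N, ∃ y', ∃ j : ℕ, x ^ j • (x • y' - y) = 0) :
    modWidth A N' ≤ modWidth A N := by
  -- `N / range f` is the localization of `N` at the powers of `x`, so `x` is bijective on it.
  have hb : Function.Bijective (LinearMap.lsmul A (N ⧸ LinearMap.range f) x) := by
    refine ⟨(injective_iff_map_eq_zero _).mpr fun q hq => ?_, fun q => ?_⟩ <;>
      obtain ⟨y, rfl⟩ := mkQ_surjective _ q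
    · rw [LinearMap.lsmul_apply, ← map_smul, mkQ_apply, Submodule.Quotient.mk_eq_zero, hmem] at hq
      obtain ⟨k, hk⟩ := hq
      rw [mkQ_apply, Submodule.Quotient.mk_eq_zero, hmem]
      exact ⟨k + 1, by rw [pow_succ, mul_smul, hk]⟩
    · obtain ⟨y', hy'⟩ := hdiv y
      refine ⟨mkQ _ y', sub_eq_zero.mp ?_⟩
      rwa [LinearMap.lsmul_apply, ← map_smul, ← map_sub, mkQ_apply, Submodule.Quotient.mk_eq_zero,
        hmem]
  have := min_modWidth_le_of_exact hf f.exact_map_mkQ_range (mkQ_surjective _)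
  rwa [modWidth_eq_top_of_bijective_smul hx hb, min_top_right] at this

namespace IsLeftInjectiveResolution

variable {Z I : ℕ → Type u} [∀ n, AddCommGroup (Z n)] [∀ n, Module A (Z n)]
  [∀ n, AddCommGroup (I n)] [∀ n, Module A (I n)]
  {ι : ∀ n, Z (n + 1) →ₗ[A] I n} {π : ∀ n, I n →ₗ[A] Z n}

lemma modWidth_primaryComponent_sup_le [IsNoetherianRing A] (h : IsLeftInjectiveResolution ι π)
    {b : Ideal A} (hb : b ≤ maximalIdeal A) (c : Ideal A) (n : ℕ) :
    modWidth A ((c ⊔ b).primaryComponent (Z n)) ≤ modWidth A (c.primaryComponent (Z n)) := by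
  induction b, IsNoetherian.noetherian b using Submodule.fg_induction generalizing c with
  | singleton x =>
    have hle : (c ⊔ Ideal.span {x}).primaryComponent (Z n) ≤ c.primaryComponent (Z n) :=
      fun y hy => (mem_primaryComponent_sup_span_singleton.mp hy).1
    refine modWidth_le_of_mem_range_iff (hb (Ideal.mem_span_singleton_self x))
      (inclusion_injective hle) (fun y => ?_) fun y => ?_
    · rw [range_inclusion, mem_comap, subtype_apply]
      refine mem_primaryComponent_sup_span_singleton.trans ?_
      simp [Subtype.ext_iff]
    · obtain ⟨y', hy', j, hj⟩ := h.exists_mem_primaryComponent_pow_smul_sub_eq_zero y.2 x 1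
      exact ⟨⟨y', hy'⟩, j, Subtype.ext (by simpa using hj)⟩
  | sup b₁ b₂ _ _ h₁ h₂ =>
    rw [← sup_assoc]
    exact (h₂ (le_sup_right.trans hb) _).trans (h₁ (le_sup_left.trans hb) _)

lemma modWidth_eq_top_of_primaryComponent_eq_bot [IsNoetherianRing A]
    (h : IsLeftInjectiveResolution ι π) {n : ℕ}
    (hZ : (maximalIdeal A).primaryComponent (Z n) = ⊥) : modWidth A (Z n) = ⊤ := by
  have htop : (⊥ : Ideal A).primaryComponent (Z n) = ⊤ :=
    eq_top_iff.mpr fun z _ => (Ideal.primaryComponent_mem _ _ _).mpr ⟨1, by simp⟩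
  have hle := h.modWidth_primaryComponent_sup_le le_rfl ⊥ n
  rw [bot_sup_eq, hZ, htop, modWidth_eq_top_of_subsingleton, top_le_iff] at hle
  rw [← hle, modWidth_congr topEquiv]

lemma modWidth_eq_modWidth_torsionBySet_ofList_add_length (h : IsLeftInjectiveResolution ι π)
    {rs : List A} (hm : ∀ r ∈ rs, r ∈ maximalIdeal A) (hrs : IsWeaklyRegular A rs) (n : ℕ) :
    modWidth A (Z n) = modWidth A (torsionBySet A (Z n) (Ideal.ofList rs)) + rs.length := by
  induction rs using List.reverseRecOn with
  | nil =>
    have htop : torsionBySet A (Z n) (Ideal.ofList ([] : List A)) = ⊤ := by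
      ext
      simp
    rw [htop, modWidth_congr topEquiv, List.length_nil, Nat.cast_zero, add_zero]
  | append_singleton rs x ih =>
    obtain ⟨hm, hx⟩ := List.forall_mem_append.mp hm
    let T := torsionBySet A (Z n) (Ideal.ofList rs)
    have hT : torsionBySet A (Z n) (Ideal.ofList (rs ++ [x])) =
        (torsionBy A T x).map T.subtype := by
      rw [Ideal.ofList_append, Ideal.ofList_singleton, torsionBySet_sup_span_singleton]
      ext z
      simp [T, Subtype.ext_iff, and_comm]
    rw [ih hm (isWeaklyRegular_concat_iff.mp hrs).1, hT,
      modWidth_eq_modWidth_torsionBy_add_one (hx x (List.mem_singleton_self x))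
        (h.surjective_smul_torsionBySet_ofList hrs n),
      modWidth_congr (equivMapOfInjective T.subtype T.injective_subtype (torsionBy A T x))]
    simp [add_assoc, add_comm]

lemma modWidth_eq_ringDepth [IsNoetherianRing A] (h : IsLeftInjectiveResolution ι π) {n : ℕ}
    (hlift : ∀ f : (maximalIdeal A).primaryComponent (I n) →ₗ[A] Z n, ∃ g, π n ∘ₗ g = f)
    (hZ : (maximalIdeal A).primaryComponent (Z n) ≠ ⊥) : modWidth A (Z n) = ringDepth A := by
  obtain ⟨rs, hm, hrs, hlen⟩ := exists_isRegular_length_eq_ringDepth A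
  obtain ⟨s, hs, hsm⟩ := exists_notMem_forall_mul_mem fun x hx =>
    not_isSMulRegular_of_length_eq_ringDepth hm hrs.toIsWeaklyRegular hlen hx
  have hwidth : modWidth A (torsionBySet A (Z n) (Ideal.ofList rs)) = 0 :=
    modWidth_eq_zero_iff.mpr fun htop => hZ <|
      h.primaryComponent_eq_bot_of_forall_exists_lift (h.surjOn_torsionBySet_of_smul_top_eq_top
        (h.surjOn_torsionBySet_ofList hrs.toIsWeaklyRegular) hs hsm htop) hlift
  rw [h.modWidth_eq_modWidth_torsionBySet_ofList_add_length hm hrs.toIsWeaklyRegular, hwidth,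
    zero_add, hlen]

end IsLeftInjectiveResolution

end LocalRing

section Localization

open IsLocalRing Submodule

lemma injective_of_flat {R A E : Type u} [CommRing R] [CommRing A] [Algebra R A]
    [Module.Flat R A] [AddCommGroup E] [Module R E] [Module A E] [IsScalarTower R A E]
    (hE : Module.Injective A E) : Module.Injective R E := by
  refine ⟨fun X Y _ _ _ _ f hf g => ?_⟩
  obtain ⟨k, hk⟩ := hE.out (f.baseChange A)
    (Module.Flat.lTensor_preserves_injective_linearMap f hf) (g.liftBaseChange A)
  exact ⟨k.restrictScalars R ∘ₗ TensorProduct.mk R A Y 1, fun x => by simpa using hk (1 ⊗ₜ x)⟩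

lemma isAssociatedPrime_iff_primaryComponent_ne_bot {R M : Type*} [CommRing R]
    [IsNoetherianRing R] [AddCommGroup M] [Module R M] {m : Ideal R} [hm : m.IsMaximal] :
    IsAssociatedPrime m M ↔ m.primaryComponent M ≠ ⊥ := by
  rw [Ne, Submodule.eq_bot_iff]
  push Not
  simp only [Ideal.primaryComponent_mem]
  refine ⟨fun ⟨_, x, hx⟩ => ?_, fun ⟨x, ⟨k, hk⟩, hx⟩ => ?_⟩
  · obtain ⟨k, hk⟩ := Ideal.exists_pow_le_of_le_radical_of_fg hx.le (IsNoetherian.noetherian m)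
    refine ⟨x, ⟨k, (mem_torsionBySet_iff _ _).mpr fun r =>
      mem_colon_singleton.mp (hk r.2)⟩, ?_⟩
    rintro rfl
    exact hm.ne_top (hx.trans (by simp))
  · refine ⟨hm.isPrime, x, hm.eq_of_le ?_ fun r hr => ⟨k, ?_⟩⟩
    · simpa
    · exact mem_colon_singleton.mpr
        ((mem_torsionBySet_iff _ _).mp hk ⟨r ^ k, Ideal.pow_mem_pow hr k⟩)

variable {R : Type u} [CommRing R]

lemma IsLeftInjectiveResolution.localizedModule [IsNoetherianRing R] {Z I : ℕ → Type u}
    [∀ n, AddCommGroup (Z n)] [∀ n, Module R (Z n)] [∀ n, AddCommGroup (I n)]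
    [∀ n, Module R (I n)] {ι : ∀ n, Z (n + 1) →ₗ[R] I n} {π : ∀ n, I n →ₗ[R] Z n}
    (h : IsLeftInjectiveResolution ι π) (S : Submonoid R) :
    IsLeftInjectiveResolution (fun n => LocalizedModule.map S (ι n))
      (fun n => LocalizedModule.map S (π n)) where
  injective n :=
    have := h.injective n
    Module.injective_of_isLocalizedModule S (LocalizedModule.mkLinearMap S (I n))
  ι_injective n := LocalizedModule.map_injective S _ (h.ι_injective n)
  exact n := LocalizedModule.map_exact S _ _ (h.exact n)
  π_surjective n := LocalizedModule.map_surjective S _ (h.π_surjective n)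

variable (p : Ideal R) [p.IsPrime] {M : Type u} [AddCommGroup M] [Module R M]

lemma isAssociatedPrime_iff_primaryComponent_localizedModule_ne_bot [IsNoetherianRing R] :
    IsAssociatedPrime p M ↔ (maximalIdeal (Localization.AtPrime p)).primaryComponent
      (LocalizedModule p.primeCompl M) ≠ ⊥ := by
  have := IsLocalization.isNoetherianRing p.primeCompl (Localization.AtPrime p) inferInstance
  have hass :=
    Module.associatedPrimes.preimage_comap_associatedPrimes_eq_associatedPrimes_of_isLocalizedModule
      p.primeCompl (Localization.AtPrime p) (LocalizedModule.mkLinearMap p.primeCompl M)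
  rw [← isAssociatedPrime_iff_primaryComponent_ne_bot, ← AssociatedPrimes.mem_iff,
    ← AssociatedPrimes.mem_iff, ← hass, Set.mem_preimage, ← Ideal.under_def,
    Localization.AtPrime.under_maximalIdeal]

lemma exists_smul_mem_primaryComponent [IsNoetherianRing R] {m : M} {s : p.primeCompl}
    (hm : LocalizedModule.mk m s ∈ (maximalIdeal (Localization.AtPrime p)).primaryComponent
      (LocalizedModule p.primeCompl M)) :
    ∃ t : p.primeCompl, t • m ∈ p.primaryComponent M := by
  obtain ⟨k, hk⟩ := (Ideal.primaryComponent_mem _ _ _).mp hm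
  have hzero : LocalizedModule.mkLinearMap p.primeCompl M ∘ₗ
      (LinearMap.toSpanSingleton R M m ∘ₗ (p ^ k).subtype) =
      LocalizedModule.mkLinearMap p.primeCompl M ∘ₗ 0 := by
    ext r
    have hr : algebraMap R (Localization.AtPrime p) r ∈
        maximalIdeal (Localization.AtPrime p) ^ k := by
      rw [← Localization.AtPrime.map_eq_maximalIdeal, ← Ideal.map_pow]
      exact Ideal.mem_map_of_mem _ r.2
    have hrm := (mem_torsionBySet_iff _ _).mp hk ⟨_, hr⟩
    rw [algebraMap_smul, LocalizedModule.smul'_mk, IsLocalizedModule.mk_eq_mk',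
      IsLocalizedModule.mk'_eq_zero] at hrm
    simpa using hrm
  obtain ⟨t, ht⟩ := Module.Finite.exists_smul_of_comp_eq_of_isLocalizedModule p.primeCompl
    (LocalizedModule.mkLinearMap p.primeCompl M) _ _ hzero
  refine ⟨t, (Ideal.primaryComponent_mem _ _ _).mpr
    ⟨k, (mem_torsionBySet_iff _ _).mpr fun r => ?_⟩⟩
  rw [smul_comm]
  simpa using LinearMap.congr_fun ht r

lemma injOn_mkLinearMap_primaryComponent [IsNoetherianRing R]
    (hmax : ∀ q : Ideal R, p < q → ¬ IsAssociatedPrime q M) :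
    Set.InjOn (LocalizedModule.mkLinearMap p.primeCompl M) (p.primaryComponent M) := by
  have hzero : ∀ t ∈ p.primaryComponent M,
      LocalizedModule.mkLinearMap p.primeCompl M t = 0 → t = 0 := by
    intro t ht h0
    by_contra hne
    obtain ⟨s, hs, hst⟩ := (IsLocalizedModule.mem_ker_iff p.primeCompl).mp h0
    obtain ⟨k, hk⟩ := (Ideal.primaryComponent_mem _ _ _).mp ht
    obtain ⟨P, hP, hle⟩ := exists_le_isAssociatedPrime_of_isNoetherianRing R t hne
    refine hmax P (lt_of_le_of_ne (fun r hr => hP.isPrime.mem_of_pow_mem k (hle ?_)) ?_) hP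
    · exact mem_colon_singleton.mpr
        ((mem_torsionBySet_iff _ _).mp hk ⟨r ^ k, Ideal.pow_mem_pow hr k⟩)
    · rintro rfl
      exact hs (hle (mem_colon_singleton.mpr hst))
  exact fun x hx y hy hxy => sub_eq_zero.mp
    (hzero _ (sub_mem hx hy) (by rw [map_sub, hxy, sub_self]))

namespace IsLeftInjectiveResolution

variable [IsNoetherianRing R] {Z I : ℕ → Type u} [∀ n, AddCommGroup (Z n)] [∀ n, Module R (Z n)]
  [∀ n, AddCommGroup (I n)] [∀ n, Module R (I n)]
  {ι : ∀ n, Z (n + 1) →ₗ[R] I n} {π : ∀ n, I n →ₗ[R] Z n}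

lemma surjOn_mkLinearMap_primaryComponent (h : IsLeftInjectiveResolution ι π) (n : ℕ) :
    Set.SurjOn (LocalizedModule.mkLinearMap p.primeCompl (Z n)) (p.primaryComponent (Z n))
      ((maximalIdeal (Localization.AtPrime p)).primaryComponent
        (LocalizedModule p.primeCompl (Z n))) := by
  intro y hy
  induction y using LocalizedModule.induction_on with
  | _ m s =>
    obtain ⟨t, ht⟩ := exists_smul_mem_primaryComponent p hy
    obtain ⟨z, hz, j, hj⟩ :=
      h.exists_mem_primaryComponent_pow_smul_sub_eq_zero ht ((t * s : p.primeCompl) : R) 1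
    refine ⟨z, hz, ?_⟩
    rw [← LocalizedModule.mk_cancel_common_left t s m, LocalizedModule.mkLinearMap_apply,
      LocalizedModule.mk_eq]
    refine ⟨(t * s) ^ j, ?_⟩
    rw [one_smul, ← sub_eq_zero, ← smul_sub]
    simpa [Submonoid.smul_def] using hj

lemma exists_localizedModule_lift (h : IsLeftInjectiveResolution ι π) {n : ℕ}
    (hmax : ∀ q : Ideal R, p < q → ¬ IsAssociatedPrime q (Z n))
    (hlift : ∀ (E : Type u) [AddCommGroup E] [Module R E], Module.Injective R E →
      ∀ f : E →ₗ[R] Z n, ∃ g, π n ∘ₗ g = f)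
    (f : (maximalIdeal (Localization.AtPrime p)).primaryComponent
      (LocalizedModule p.primeCompl (I n)) →ₗ[Localization.AtPrime p]
        LocalizedModule p.primeCompl (Z n)) :
    ∃ g, LocalizedModule.map p.primeCompl (π n) ∘ₗ g = f := by
  have := IsLocalization.isNoetherianRing p.primeCompl (Localization.AtPrime p) inferInstance
  let ψ := (LocalizedModule.mkLinearMap p.primeCompl (Z n)).domRestrict (p.primaryComponent (Z n))
  have hψ : Function.Injective ψ := (injOn_mkLinearMap_primaryComponent p hmax).injective
  have hf e : f e ∈ LinearMap.range ψ := by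
    obtain ⟨z, hz, hze⟩ := h.surjOn_mkLinearMap_primaryComponent p n
      (Ideal.primaryComponent_map_mem _ f ⟨e, primaryComponent_primaryComponent _ |>.ge mem_top⟩)
    exact ⟨⟨z, hz⟩, hze⟩
  have hE := injective_of_flat (R := R)
    (injective_primaryComponent ((h.localizedModule p.primeCompl).injective n) (maximalIdeal _))
  let f' := (f.restrictScalars R).codRestrictOfInjective ψ hψ hf
  obtain ⟨g, hg⟩ := hlift _ hE ((p.primaryComponent (Z n)).subtype ∘ₗ f')
  refine ⟨(LocalizedModule.mkLinearMap p.primeCompl (I n) ∘ₗ g).extendScalarsOfIsLocalization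
    p.primeCompl (Localization.AtPrime p), LinearMap.ext fun e => ?_⟩
  calc LocalizedModule.map p.primeCompl (π n) (LocalizedModule.mk (g e) 1)
      = LocalizedModule.mkLinearMap p.primeCompl (Z n) (π n (g e)) := LocalizedModule.map_mk ..
    _ = ψ (f' e) := congrArg _ (LinearMap.congr_fun hg e)
    _ = f e := LinearMap.codRestrictOfInjective_comp_apply ..

lemma modWidth_localizedModule_eq_top (h : IsLeftInjectiveResolution ι π) {n : ℕ}
    (hp : ¬ IsAssociatedPrime p (Z n)) :
    modWidth (Localization.AtPrime p) (LocalizedModule p.primeCompl (Z n)) = ⊤ := by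
  have := IsLocalization.isNoetherianRing p.primeCompl (Localization.AtPrime p) inferInstance
  rw [isAssociatedPrime_iff_primaryComponent_localizedModule_ne_bot, not_not] at hp
  exact (h.localizedModule p.primeCompl).modWidth_eq_top_of_primaryComponent_eq_bot hp

lemma modWidth_localizedModule_eq_ringDepth (h : IsLeftInjectiveResolution ι π) {n : ℕ}
    (hlift : ∀ (E : Type u) [AddCommGroup E] [Module R E], Module.Injective R E →
      ∀ f : E →ₗ[R] Z n, ∃ g, π n ∘ₗ g = f)
    (hp : Maximal (IsAssociatedPrime · (Z n)) p) :
    modWidth (Localization.AtPrime p) (LocalizedModule p.primeCompl (Z n)) =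
      ringDepth (Localization.AtPrime p) := by
  have := IsLocalization.isNoetherianRing p.primeCompl (Localization.AtPrime p) inferInstance
  exact (h.localizedModule p.primeCompl).modWidth_eq_ringDepth
    (h.exists_localizedModule_lift p (fun _ hq => hp.not_prop_of_gt hq) hlift)
    ((isAssociatedPrime_iff_primaryComponent_localizedModule_ne_bot p).mp hp.prop)

end IsLeftInjectiveResolution

lemma modWidth_localizedModule_congr {N : Type u} [AddCommGroup N] [Module R N] (e : M ≃ₗ[R] N) :
    modWidth (Localization.AtPrime p) (LocalizedModule p.primeCompl M) =
      modWidth (Localization.AtPrime p) (LocalizedModule p.primeCompl N) :=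
  modWidth_congr <| LinearEquiv.ofBijective (LocalizedModule.map p.primeCompl e.toLinearMap)
    ⟨LocalizedModule.map_injective _ _ e.injective, LocalizedModule.map_surjective _ _ e.surjective⟩

end Localization

lemma IsGorensteinInjective.exists_isLeftInjectiveResolution {R : Type u} [CommRing R]
    {J : Type u} [AddCommGroup J] [Module R J] (hJ : IsGorensteinInjective R J) :
    ∃ (Z I : ℕ → Type u) (_ : ∀ n, AddCommGroup (Z n)) (_ : ∀ n, Module R (Z n))
      (_ : ∀ n, AddCommGroup (I n)) (_ : ∀ n, Module R (I n))
      (ι : ∀ n, Z (n + 1) →ₗ[R] I n) (π : ∀ n, I n →ₗ[R] Z n),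
      IsLeftInjectiveResolution ι π ∧ Nonempty (J ≃ₗ[R] Z 0) ∧
      ∀ (E : Type u) [AddCommGroup E] [Module R E], Module.Injective R E →
        ∀ f : E →ₗ[R] Z 0, ∃ g, π 0 ∘ₗ g = f := by
  obtain ⟨W⟩ := hJ
  let := W.acg
  let := W.mod
  let k : ℕ → ℤ := Nat.rec (-1) fun _ j => j + 1
  refine ⟨fun n => LinearMap.ker (W.d (k n)), fun n => W.I (k n + 1 + 1), inferInstance,
    inferInstance, inferInstance, inferInstance, fun n => (LinearMap.ker (W.d (k (n + 1)))).subtype,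
    fun n => (W.d (k n + 1)).codRestrict _ (LinearMap.congr_fun (W.d_comp_d (k n))),
    ⟨fun n => W.inj _, fun n => Submodule.injective_subtype _, fun n => ?_, fun n => ?_⟩,
    W.ker_iso, fun E _ _ hE f => ?_⟩
  · refine fun y => ⟨fun hy => ⟨⟨y, congrArg Subtype.val hy⟩, rfl⟩, ?_⟩
    rintro ⟨z, rfl⟩
    exact Subtype.ext z.2
  · rintro ⟨z, hz⟩
    obtain ⟨y, rfl⟩ := (W.exact (k n)).le hz
    exact ⟨y, rfl⟩
  · obtain ⟨g, hg⟩ := W.hom_exact E hE (-1) ((LinearMap.ker (W.d (-1))).subtype ∘ₗ f)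
      (LinearMap.ext fun e => (f e).2)
    exact ⟨g, LinearMap.ext fun e => Subtype.ext (LinearMap.congr_fun hg e)⟩

theorem modWidth_eq_ringDepth_of_maximal_in_small_support_general
    {R : Type u} [CommRing R] [IsNoetherianRing R] {Z I : ℕ → Type u}
    [∀ n, AddCommGroup (Z n)] [∀ n, Module R (Z n)] [∀ n, AddCommGroup (I n)]
    [∀ n, Module R (I n)] {ι : ∀ n, Z (n + 1) →ₗ[R] I n} {π : ∀ n, I n →ₗ[R] Z n}
    (h : IsLeftInjectiveResolution ι π) {n : ℕ}
    (hlift : ∀ (E : Type u) [AddCommGroup E] [Module R E], Module.Injective R E →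
      ∀ f : E →ₗ[R] Z n, ∃ g, π n ∘ₗ g = f)
    (p : Ideal R) [p.IsPrime]
    (hfin : modWidth (Localization.AtPrime p) (LocalizedModule p.primeCompl (Z n)) < ⊤)
    (hmax : ∀ (q : Ideal R) [q.IsPrime], p < q →
      modWidth (Localization.AtPrime q) (LocalizedModule q.primeCompl (Z n)) = ⊤) :
    modWidth (Localization.AtPrime p) (LocalizedModule p.primeCompl (Z n)) =
      ringDepth (Localization.AtPrime p) := by
  have hp : IsAssociatedPrime p (Z n) := by
    contrapose! hfin
    exact (h.modWidth_localizedModule_eq_top p hfin).ge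
  obtain ⟨q, hpq, hq⟩ := exists_maximal_ge_of_wellFoundedGT (IsAssociatedPrime · (Z n)) p hp
  have := hq.prop.isPrime
  have hwidth := h.modWidth_localizedModule_eq_ringDepth q hlift hq
  obtain rfl | hlt := hpq.eq_or_lt
  · exact hwidth
  · have := IsLocalization.isNoetherianRing q.primeCompl (Localization.AtPrime q) inferInstance
    exact absurd (hwidth.symm.trans (hmax q hlt)) ringDepth_lt_top.ne

theorem modWidth_eq_ringDepth_of_maximal_in_small_support
    (R : Type u) [CommRing R] [IsNoetherianRing R]
    (J : Type u) [AddCommGroup J] [Module R J] (hJ : IsGorensteinInjective R J)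
    (p : Ideal R) [p.IsPrime]
    (hfin : modWidth (Localization.AtPrime p) (LocalizedModule p.primeCompl J) < ⊤)
    (hmax : ∀ (q : Ideal R) [q.IsPrime], p < q →
      modWidth (Localization.AtPrime q) (LocalizedModule q.primeCompl J) = ⊤) :
    modWidth (Localization.AtPrime p) (LocalizedModule p.primeCompl J) =
      ringDepth (Localization.AtPrime p) := by
  obtain ⟨Z, I, _, _, _, _, ι, π, h, ⟨e⟩, hlift⟩ := hJ.exists_isLeftInjectiveResolution
  rw [modWidth_localizedModule_congr p e] at hfin ⊢
  exact modWidth_eq_ringDepth_of_maximal_in_small_support_general h hlift p hfin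
    fun q _ hq => (modWidth_localizedModule_congr q e).symm.trans (hmax q hq)
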